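/- arXiv:1104.5257 — 10 statements merged into one kernel-verified Lean document; each statement's English description precedes it below -/
import Mathlib

section
/- Let r be a binary relation on a set α and s a binary relation on a set β. There exists a homomorphism from r to s if and only if there exists a surjective homomorphism from the disjoint union r ⊎ s to s. -/
/-- The disjoint union of two binary relations, on the sum type. -/
def SumRel {α β : Type*} (r : α → α → Prop) (s : β → β → Prop) :
    α ⊕ β → α ⊕ β → Prop
  | Sum.inl x, Sum.inl y => r x y
  | Sum.inr x, Sum.inr y => s x y
  | _, _ => False

namespace SumRel

variable {α β γ : Type*} {r : α → α → Prop} {s : β → β → Prop} {t : γ → γ → Prop}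

theorem forall_map_rel_iff {g : α ⊕ β → γ} :
    (∀ x y, SumRel r s x y → t (g x) (g y)) ↔
      (∀ x y, r x y → t (g (Sum.inl x)) (g (Sum.inl y))) ∧
        ∀ x y, s x y → t (g (Sum.inr x)) (g (Sum.inr y)) := by
  constructor
  · intro hg
    exact ⟨fun x y => hg (Sum.inl x) (Sum.inl y), fun x y => hg (Sum.inr x) (Sum.inr y)⟩
  · rintro ⟨hr, hs⟩ (x | x) (y | y) hxy
    · exact hr x y hxy
    · exact hxy.elim
    · exact hxy.elim
    · exact hs x y hxy

end SumRel

/-- There is a homomorphism from `r` to `s` iff there is a surjective homomorphism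
from the disjoint union `r ⊎ s` to `s`. -/
theorem hom_iff_surjHom_sumRel {α β : Type*} (r : α → α → Prop) (s : β → β → Prop) :
    (∃ f : α → β, ∀ x y, r x y → s (f x) (f y)) ↔
      (∃ g : α ⊕ β → β, Function.Surjective g ∧
        ∀ x y, SumRel r s x y → s (g x) (g y)) := by
  constructor
  · rintro ⟨f, hf⟩
    have elim_surjective : Function.Surjective (Sum.elim f (id : β → β)) :=
      Function.RightInverse.surjective (g := Sum.inr) fun _ => rfl
    exact ⟨Sum.elim f id, elim_surjective, SumRel.forall_map_rel_iff.2 ⟨hf, fun _ _ => id⟩⟩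
  · rintro ⟨g, -, hg⟩
    exact ⟨g ∘ Sum.inl, (SumRel.forall_map_rel_iff.1 hg).1⟩
end

section
/- Let r be a binary relation on a nonempty set α and s a binary relation on a set β that contains two distinct elements. There exists a homomorphism from r to s if and only if there exists a non-constant homomorphism from the disjoint union of r with the empty relation on a one-element set (an isolated loopless vertex) to s. -/
theorem SumRel.hom_iff {α β γ : Type*} {r : α → α → Prop} {t : γ → γ → Prop}
    {s : β → β → Prop} {g : α ⊕ γ → β} :
    (∀ x y, SumRel r t x y → s (g x) (g y)) ↔
      (∀ x y, r x y → s (g (Sum.inl x)) (g (Sum.inl y))) ∧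
        ∀ u v, t u v → s (g (Sum.inr u)) (g (Sum.inr v)) := by
  constructor
  · intro hg
    exact ⟨fun x y => hg (Sum.inl x) (Sum.inl y), fun u v => hg (Sum.inr u) (Sum.inr v)⟩
  · rintro ⟨hl, hr⟩ (x | u) (y | v) h
    · exact hl x y h
    · exact h.elim
    · exact h.elim
    · exact hr u v h

theorem SumRel.hom_empty_right_iff {α β γ : Type*} {r : α → α → Prop}
    {s : β → β → Prop} {g : α ⊕ γ → β} :
    (∀ x y, SumRel r (fun _ _ : γ => False) x y → s (g x) (g y)) ↔
      ∀ x y, r x y → s (g (Sum.inl x)) (g (Sum.inl y)) :=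
  SumRel.hom_iff.trans (and_iff_left fun _ _ => False.elim)

theorem exists_nonconstant_sum_extension {α β : Type*} (γ : Type*) [Nonempty α] [Nonempty γ]
    [Nontrivial β] (f : α → β) :
    ∃ g : α ⊕ γ → β, (∃ u v, g u ≠ g v) ∧ ∀ x, g (Sum.inl x) = f x := by
  obtain ⟨a⟩ := ‹Nonempty α›
  obtain ⟨c⟩ := ‹Nonempty γ›
  obtain ⟨b, hb⟩ := exists_ne (f a)
  exact ⟨Sum.elim f fun _ => b, ⟨Sum.inr c, Sum.inl a, hb⟩, fun _ => rfl⟩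

theorem hom_iff_ntHom_sum_K1_general {α β γ : Type*} [Nonempty α] [Nonempty γ] [Nontrivial β]
    (r : α → α → Prop) (s : β → β → Prop) :
    (∃ f : α → β, ∀ x y, r x y → s (f x) (f y)) ↔
      (∃ g : α ⊕ γ → β, (∃ u v, g u ≠ g v) ∧
        ∀ x y, SumRel r (fun _ _ : γ => False) x y → s (g x) (g y)) := by
  simp only [SumRel.hom_empty_right_iff]
  constructor
  · rintro ⟨f, hf⟩
    obtain ⟨g, g_nonconstant, g_inl⟩ := exists_nonconstant_sum_extension γ f
    exact ⟨g, g_nonconstant, by simpa only [g_inl] using hf⟩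
  · rintro ⟨g, -, hg⟩
    exact ⟨g ∘ Sum.inl, hg⟩

/-- For nonempty `α` and `β` with two distinct elements, there is a homomorphism
from `r` to `s` iff there is a non-constant homomorphism from `r ⊎ K₁`
(disjoint union with an isolated loopless vertex) to `s`. -/
theorem hom_iff_ntHom_sum_K1 {α β : Type*} [Nonempty α]
    (r : α → α → Prop) (s : β → β → Prop) (hβ : ∃ b b' : β, b ≠ b') :
    (∃ f : α → β, ∀ x y, r x y → s (f x) (f y)) ↔
      (∃ g : α ⊕ Unit → β, (∃ u v : α ⊕ Unit, g u ≠ g v) ∧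
        ∀ x y, SumRel r (fun _ _ : Unit => False) x y → s (g x) (g y)) := by
  have : Nontrivial β := ⟨hβ⟩
  exact hom_iff_ntHom_sum_K1_general r s
end

section
/- Let G be a finite connected simple graph with at least 2 vertices. Then G is 3-colourable if and only if there exists a non-constant homomorphism from the adjacency relation of G to the disjoint union K3 ⊎ K1^ref. -/
section

variable {α β : Type*} {r : α → α → Prop} {s : β → β → Prop}

theorem SumRel.isLeft_eq : ∀ {a b : α ⊕ β}, SumRel r s a b → a.isLeft = b.isLeft
  | .inl _, .inl _, _ => rfl
  | .inr _, .inr _, _ => rfl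

variable {V : Type*} {G : SimpleGraph V}

theorem eq_of_reachable_of_forall_adj {γ : Type*} {f : V → γ}
    (hf : ∀ x y, G.Adj x y → f x = f y) {x y : V} (hxy : G.Reachable x y) : f x = f y := by
  obtain ⟨walk⟩ := hxy
  induction walk with
  | nil => rfl
  | cons hadj _ ih => exact (hf _ _ hadj).trans ih

theorem exists_eq_inl_comp_or_exists_eq_inr_comp_of_preconnected (hG : G.Preconnected)
    {f : V → α ⊕ β} (hf : ∀ x y, G.Adj x y → SumRel r s (f x) (f y)) :
    (∃ g : V → α, f = Sum.inl ∘ g) ∨ ∃ g : V → β, f = Sum.inr ∘ g := by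
  have isLeft_eq (x y : V) : (f x).isLeft = (f y).isLeft :=
    eq_of_reachable_of_forall_adj (f := fun v ↦ (f v).isLeft)
      (fun u v huv ↦ (hf u v huv).isLeft_eq) (hG x y)
  by_cases hleft : ∀ x, (f x).isLeft
  · choose g hg using fun x ↦ Sum.isLeft_iff.mp (hleft x)
    exact .inl ⟨g, funext hg⟩
  · obtain ⟨x₀, hx₀⟩ := not_forall.mp hleft
    have hright (x : V) : (f x).isRight := by
      rwa [← Sum.not_isLeft, isLeft_eq x x₀]
    choose g hg using fun x ↦ Sum.isRight_iff.mp (hright x)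
    exact .inr ⟨g, funext hg⟩

theorem exists_ne_of_forall_adj_of_irrefl [Nontrivial V] (hr : ∀ a, ¬r a a)
    (hG : G.Preconnected) {g : V → α} (hg : ∀ x y, G.Adj x y → r (g x) (g y)) :
    ∃ x y, g x ≠ g y := by
  obtain ⟨x⟩ := ‹Nontrivial V›.to_nonempty
  obtain ⟨y, hxy⟩ := hG.exists_adj_of_nontrivial x
  exact ⟨x, y, fun heq ↦ hr (g y) (heq ▸ hg x y hxy)⟩

theorem exists_hom_iff_exists_nonconstant_hom_sumRel [Nontrivial V] [Subsingleton β]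
    (hr : ∀ a, ¬r a a) (hG : G.Preconnected) :
    (∃ g : V → α, ∀ x y, G.Adj x y → r (g x) (g y)) ↔
      ∃ f : V → α ⊕ β, (∃ x y, f x ≠ f y) ∧ ∀ x y, G.Adj x y → SumRel r s (f x) (f y) := by
  constructor
  · rintro ⟨g, hg⟩
    obtain ⟨x, y, hxy⟩ := exists_ne_of_forall_adj_of_irrefl hr hG hg
    exact ⟨Sum.inl ∘ g, ⟨x, y, Sum.inl_injective.ne hxy⟩, hg⟩
  · rintro ⟨f, ⟨x, y, hxy⟩, hf⟩
    obtain ⟨g, rfl⟩ | ⟨g, rfl⟩ := exists_eq_inl_comp_or_exists_eq_inr_comp_of_preconnected hG hf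
    · exact ⟨g, hf⟩
    · exact absurd (congrArg Sum.inr (Subsingleton.elim (g x) (g y))) hxy

theorem colorable_iff_exists_forall_adj_ne {n : ℕ} :
    G.Colorable n ↔ ∃ c : V → Fin n, ∀ x y, G.Adj x y → c x ≠ c y :=
  ⟨fun ⟨c⟩ ↦ ⟨c, fun _ _ ↦ c.valid⟩, fun ⟨c, hc⟩ ↦ ⟨.mk c (hc _ _)⟩⟩

end

theorem colorable_iff_ntHom_K3_K1ref_general {V β : Type*} [Nontrivial V] [Subsingleton β]
    {G : SimpleGraph V} (hG : G.Preconnected) (n : ℕ) (s : β → β → Prop) :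
    G.Colorable n ↔
      ∃ f : V → Fin n ⊕ β, (∃ x y, f x ≠ f y) ∧
        ∀ x y, G.Adj x y → SumRel (fun i j ↦ i ≠ j) s (f x) (f y) :=
  colorable_iff_exists_forall_adj_ne.trans <|
    exists_hom_iff_exists_nonconstant_hom_sumRel (fun _ ↦ not_not_intro rfl) hG

/-- A finite connected graph with at least 2 vertices is 3-colourable iff there is a
non-constant homomorphism from its adjacency relation to `K₃ ⊎ K₁^ref`. -/
theorem colorable_iff_ntHom_K3_K1ref {V : Type*} [Fintype V] (G : SimpleGraph V)
    (hconn : G.Connected) (hcard : 2 ≤ Fintype.card V) :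
    G.Colorable 3 ↔
      (∃ f : V → (Fin 3) ⊕ Unit, (∃ x y : V, f x ≠ f y) ∧
        ∀ x y, G.Adj x y →
          SumRel (fun i j : Fin 3 => i ≠ j) (fun _ _ : Unit => True) (f x) (f y)) := by
  have : Nontrivial V := Fintype.one_lt_card_iff_nontrivial.mp hcard
  exact colorable_iff_ntHom_K3_K1ref_general hconn.preconnected 3 _
end

section
/- Let G be a finite connected simple graph with at least 3 vertices. Then G is 3-colourable if and only if there exists a surjective homomorphism from the disjoint union of the adjacency relation of G with K1^ref to the disjoint union K3 ⊎ K1^ref. -/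
/-!
A proper colouring of a graph with at least as many vertices as colours can be made surjective:
choose one vertex for each colour that occurs, further distinct vertices for the remaining colours,
and recolour each chosen vertex with the colour it was chosen for. Such a colouring extends by the
identity to a surjective homomorphism.

Conversely, a homomorphism sends loops to loops, hence the reflexive summand into the reflexive
summand, and it sends the connected graph `G` into a single summand. Surjectivity forces `G` into
the complete graph, that is, yields a proper colouring.
-/

section SurjectiveColoring

open Set

theorem exists_injective_extension_of_card_le {α β : Type*} [Finite α] {s : Set α} (f : s ↪ β)
    (hcard : ENat.card α ≤ ENat.card β) :
    ∃ g : α → β, Function.Injective g ∧ ∀ a : s, g a = f a := by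
  have hrange : (range f).encard ≤ ENat.card α := by
    rw [← image_univ, f.injective.encard_image, encard_univ]
    exact ENat.card_le_card_of_injective Subtype.val_injective
  obtain ⟨t, hft, -, ht⟩ := exists_superset_subset_encard_eq (subset_univ (range f)) hrange
    (by rwa [encard_univ])
  have : Finite t := finite_coe_iff.2 <| encard_ne_top_iff.1 <| by
    simp [ht, ENat.card_eq_coe_natCard]
  have hαt : Nonempty (α ≃ t) := Finite.card_eq.1 <| by
    simpa only [encard, ENat.card_eq_coe_natCard, Nat.cast_inj] using ht.symm
  obtain ⟨g, hg⟩ := Cardinal.extend_function_finite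
    (f.codRestrict t fun a ↦ hft (mem_range_self a)) hαt
  exact ⟨fun a ↦ g a, Subtype.val_injective.comp g.injective, fun a ↦ congrArg Subtype.val (hg a)⟩

variable {V α : Type*} {G : SimpleGraph V}

theorem extend_id_coloring_valid (c : G.Coloring α) {e : α → V} (he : Function.Injective e)
    (hce : ∀ a ∈ range c, c (e a) = a) {u v : V} (huv : G.Adj u v) :
    Function.extend e id c u ≠ Function.extend e id c v := by
  have ne_of_adj {a : α} {w : V} (haw : G.Adj (e a) w) : a ≠ c w := by
    rintro rfl
    exact c.valid haw (hce _ (mem_range_self w))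
  by_cases hu : u ∈ range e <;> by_cases hv : v ∈ range e
  · obtain ⟨a, rfl⟩ := hu
    obtain ⟨b, rfl⟩ := hv
    simpa only [he.extend_apply, id, he.ne_iff] using huv.ne
  · obtain ⟨a, rfl⟩ := hu
    simpa only [he.extend_apply, id, Function.extend_apply' _ _ _ hv] using ne_of_adj huv
  · obtain ⟨b, rfl⟩ := hv
    simpa only [he.extend_apply, id, Function.extend_apply' _ _ _ hu] using
      (ne_of_adj huv.symm).symm
  · simpa only [Function.extend_apply' _ _ _ hu, Function.extend_apply' _ _ _ hv] using c.valid huv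

theorem exists_surjective_coloring [Finite α] (c : G.Coloring α)
    (hcard : ENat.card α ≤ ENat.card V) : ∃ c' : G.Coloring α, Function.Surjective c' := by
  obtain ⟨e, he, hce⟩ := exists_injective_extension_of_card_le
    ⟨rangeSplitting c, rangeSplitting_injective c⟩ hcard
  have hsection (a : α) (ha : a ∈ range c) : c (e a) = a := by
    rw [hce ⟨a, ha⟩]
    exact apply_rangeSplitting c ⟨a, ha⟩
  exact ⟨.mk _ (extend_id_coloring_valid c he hsection), fun a ↦ ⟨e a, he.extend_apply id c a⟩⟩

end SurjectiveColoring

theorem eq_of_preconnected_of_forall_adj {V α : Type*} {G : SimpleGraph V} (hG : G.Preconnected)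
    {f : V → α} (hf : ∀ u v, G.Adj u v → f u = f v) (u v : V) : f u = f v := by
  obtain ⟨p⟩ := hG u v
  induction p with
  | nil => rfl
  | cons huw _ ih => exact (hf _ _ huw).trans ih

namespace SumRel

variable {α β α' β' : Type*} {r : α → α → Prop} {s : β → β → Prop} {r' : α' → α' → Prop}
  {s' : β' → β' → Prop}

/-- The disjoint union of two relation homomorphisms, acting as `Sum.map`. -/
def map (f : r →r r') (g : s →r s') : SumRel r s →r SumRel r' s' where
  toFun := Sum.map f g
  map_rel' {x y} h := by
    rcases x with a | b <;> rcases y with a' | b'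
    exacts [f.map_rel h, h, h, g.map_rel h]

theorem isLeft_eq_s3 {x y : α ⊕ β} (h : SumRel r s x y) : x.isLeft = y.isLeft := by
  rcases x with a | b <;> rcases y with a' | b'
  exacts [rfl, h.elim, h.elim, rfl]

theorem isRight_of_self [Std.Irrefl r] {x : α ⊕ β} (h : SumRel r s x x) : x.isRight := by
  rcases x with a | b
  exacts [(irrefl_of r a h).elim, rfl]

theorem nonempty_hom_of_forall_isLeft (f : SumRel r s →r SumRel r' s')
    (hf : ∀ a, (f (.inl a)).isLeft) : Nonempty (r →r r') := by
  choose g hg using fun a ↦ Sum.isLeft_iff.1 (hf a)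
  refine ⟨g, fun {a a'} h ↦ ?_⟩
  have hfaa' : SumRel r' s' (f (.inl a)) (f (.inl a')) := f.map_rel h
  rwa [hg, hg] at hfaa'

theorem nonempty_hom_of_surjective {V : Type*} {G : SimpleGraph V} (hG : G.Preconnected)
    [Std.Refl s] [Std.Irrefl r'] [Nonempty α'] (f : SumRel G.Adj s →r SumRel r' s')
    (hf : Function.Surjective f) : Nonempty (G.Adj →r r') := by
  have isRight_inr (b : β) : (f (.inr b)).isRight :=
    isRight_of_self (f.map_rel (refl_of s b))
  have isLeft_inl_eq (u v : V) : (f (.inl u)).isLeft = (f (.inl v)).isLeft :=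
    eq_of_preconnected_of_forall_adj hG
      (fun x y hxy ↦ isLeft_eq_s3 <| f.map_rel (a := .inl x) (b := .inl y) hxy) u v
  obtain ⟨a⟩ := ‹Nonempty α'›
  obtain ⟨v | b, hfa⟩ := hf (.inl a)
  · exact nonempty_hom_of_forall_isLeft f fun u ↦ by rw [isLeft_inl_eq u v, hfa, Sum.isLeft_inl]
  · simpa [hfa] using isRight_inr b

end SumRel

theorem colorable_iff_sHom_K3_K1ref_general {V β : Type*} {G : SimpleGraph V} {n : ℕ} [NeZero n]
    {s : β → β → Prop} [Std.Refl s] (hG : G.Preconnected) (hcard : n ≤ ENat.card V) :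
    G.Colorable n ↔
      ∃ f : V ⊕ β → Fin n ⊕ β, Function.Surjective f ∧
        ∀ x y, SumRel G.Adj s x y → SumRel (fun i j : Fin n => i ≠ j) s (f x) (f y) := by
  constructor
  · rintro ⟨c⟩
    obtain ⟨c', hc'⟩ := exists_surjective_coloring c (by simpa using hcard)
    exact ⟨SumRel.map c' (RelHom.id s), hc'.sumMap Function.surjective_id,
      fun _ _ ↦ (SumRel.map c' (RelHom.id s)).map_rel⟩
  · rintro ⟨f, hsurj, hf⟩
    have : Std.Irrefl fun i j : Fin n ↦ i ≠ j := ⟨fun _ h ↦ h rfl⟩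
    exact SumRel.nonempty_hom_of_surjective hG ⟨f, hf _ _⟩ hsurj

/-- A finite connected graph with at least 3 vertices is 3-colourable iff there is a
surjective homomorphism from `G ⊎ K₁^ref` to `K₃ ⊎ K₁^ref`. -/
theorem colorable_iff_sHom_K3_K1ref {V : Type*} [Fintype V] (G : SimpleGraph V)
    (hconn : G.Connected) (hcard : 3 ≤ Fintype.card V) :
    G.Colorable 3 ↔
      (∃ f : V ⊕ Unit → (Fin 3) ⊕ Unit, Function.Surjective f ∧
        ∀ x y, SumRel G.Adj (fun _ _ : Unit => True) x y →
          SumRel (fun i j : Fin 3 => i ≠ j) (fun _ _ : Unit => True) (f x) (f y)) := by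
  have : Std.Refl fun _ _ : Unit ↦ True := ⟨fun _ ↦ trivial⟩
  exact colorable_iff_sHom_K3_K1ref_general hconn.preconnected (by simpa using hcard)
end

section
/- Let G be a finite simple graph. There exists a surjective homomorphism from G to C4^ref if and only if G has a disconnected cut, i.e. there exists a set U of vertices with both U and its complement nonempty, such that the subgraph of G induced on U is not connected and the subgraph of G induced on the complement of U is not connected. -/
/-! Two elements of `ℤ/4` are non-adjacent in the reflexive 4-cycle exactly when they differ by `2`.
A surjective homomorphism is therefore a partition of the vertices into four nonempty classes with
no edges between opposite classes, that is, a partition into two sets `f⁻¹{0, 2}` and `f⁻¹{1, 3}`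
each of which splits into two nonempty parts with no edges in between. -/

section

variable {V : Type*} {G : SimpleGraph V}

/-- `A` and `B` form a separation of `A ∪ B` in `G`: they are nonempty and disjoint, and no edge
joins them. Such pairs witness that the subgraph induced on `A ∪ B` is disconnected. -/
structure IsSeparation (G : SimpleGraph V) (A B : Set V) : Prop where
  nonempty_left : A.Nonempty
  nonempty_right : B.Nonempty
  disjoint : Disjoint A B
  not_adj : ∀ a ∈ A, ∀ b ∈ B, ¬ G.Adj a b

theorem IsSeparation.not_preconnected_induce_union {A B : Set V} (h : IsSeparation G A B) :
    ¬ (G.induce (A ∪ B)).Preconnected := by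
  intro hconn
  obtain ⟨a, ha⟩ := h.nonempty_left
  obtain ⟨b, hb⟩ := h.nonempty_right
  obtain ⟨walk⟩ := hconn ⟨a, .inl ha⟩ ⟨b, .inr hb⟩
  obtain ⟨edge, -, hfst, hsnd⟩ := walk.exists_boundary_dart (Subtype.val ⁻¹' A) ha
    (h.disjoint.notMem_of_mem_right hb)
  exact h.not_adj _ hfst _ (edge.snd.2.resolve_left hsnd) edge.adj

theorem exists_isSeparation_of_not_preconnected_induce {U : Set V}
    (h : ¬ (G.induce U).Preconnected) : ∃ A B, IsSeparation G A B ∧ A ∪ B = U := by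
  simp only [SimpleGraph.Preconnected, not_forall] at h
  obtain ⟨u, v, huv⟩ := h
  let component : Set U := {w | (G.induce U).Reachable u w}
  refine ⟨(↑) '' component, (↑) '' componentᶜ, ⟨⟨u, u, .rfl, rfl⟩, ⟨v, v, huv, rfl⟩, ?_, ?_⟩, ?_⟩
  · exact (Set.disjoint_image_iff Subtype.val_injective).mpr disjoint_compl_right
  · rintro _ ⟨a, ha, rfl⟩ _ ⟨b, hb, rfl⟩ hab
    have hab' : (G.induce U).Adj a b := hab
    exact hb (ha.trans hab'.reachable)
  · rw [← Set.image_union, Set.union_compl_self, Set.image_univ, Subtype.range_coe]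

theorem not_connected_induce_iff_exists_isSeparation {U : Set V} (hU : U.Nonempty) :
    ¬ (G.induce U).Connected ↔ ∃ A B, IsSeparation G A B ∧ A ∪ B = U := by
  have : Nonempty U := hU.to_subtype
  rw [SimpleGraph.connected_iff, and_iff_left this]
  refine ⟨exists_isSeparation_of_not_preconnected_induce, ?_⟩
  rintro ⟨A, B, hAB, rfl⟩
  exact hAB.not_preconnected_induce_union

/-- `f` is a homomorphism from `G` to the reflexive 4-cycle on `ℤ/4`. -/
def IsC4refHom (G : SimpleGraph V) (f : V → ZMod 4) : Prop :=
  ∀ u v, G.Adj u v → (f u - f v = 1 ∨ f u - f v = 0 ∨ f u - f v = -1)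

theorem isC4refHom_iff_ne_add_two {f : V → ZMod 4} :
    IsC4refHom G f ↔ ∀ u v, G.Adj u v → f u ≠ f v + 2 := by
  have adj_iff : ∀ p q : ZMod 4, (p - q = 1 ∨ p - q = 0 ∨ p - q = -1) ↔ p ≠ q + 2 := by decide
  simp only [IsC4refHom, adj_iff]

theorem IsC4refHom.isSeparation_fibers {f : V → ZMod 4} (hom : IsC4refHom G f)
    (hf : Function.Surjective f) (i : ZMod 4) :
    IsSeparation G (f ⁻¹' {i}) (f ⁻¹' {i + 2}) where
  nonempty_left := hf i
  nonempty_right := hf (i + 2)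
  disjoint := by
    have opposite_ne : (2 : ZMod 4) ≠ 0 := by decide
    exact Disjoint.preimage f (by simpa using opposite_ne)
  not_adj := by
    rintro a rfl b hb hab
    exact isC4refHom_iff_ne_add_two.mp hom b a hab.symm hb

theorem surjective_and_isC4refHom_iff_isSeparation_fibers {f : V → ZMod 4} :
    Function.Surjective f ∧ IsC4refHom G f ↔
      IsSeparation G (f ⁻¹' {0}) (f ⁻¹' {2}) ∧ IsSeparation G (f ⁻¹' {1}) (f ⁻¹' {3}) := by
  refine ⟨fun ⟨hf, hom⟩ ↦ ⟨hom.isSeparation_fibers hf 0, hom.isSeparation_fibers hf 1⟩, ?_⟩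
  rintro ⟨h02, h13⟩
  constructor
  · have eq_cases : ∀ i : ZMod 4, i = 0 ∨ i = 1 ∨ i = 2 ∨ i = 3 := by decide
    intro i
    rcases eq_cases i with rfl | rfl | rfl | rfl
    exacts [h02.nonempty_left, h13.nonempty_left, h02.nonempty_right, h13.nonempty_right]
  · have opposite_cases : ∀ p q : ZMod 4, p = q + 2 →
        p = 0 ∧ q = 2 ∨ p = 2 ∧ q = 0 ∨ p = 1 ∧ q = 3 ∨ p = 3 ∧ q = 1 := by decide
    refine isC4refHom_iff_ne_add_two.mpr fun u v huv hopp ↦ ?_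
    rcases opposite_cases _ _ hopp with ⟨hu, hv⟩ | ⟨hu, hv⟩ | ⟨hu, hv⟩ | ⟨hu, hv⟩
    exacts [h02.not_adj u hu v hv huv, h02.not_adj v hv u hu huv.symm,
      h13.not_adj u hu v hv huv, h13.not_adj v hv u hu huv.symm]

theorem compl_fiber_zero_union_fiber_two (f : V → ZMod 4) :
    (f ⁻¹' {0} ∪ f ⁻¹' {2})ᶜ = f ⁻¹' {1} ∪ f ⁻¹' {3} := by
  have odd_iff : ∀ p : ZMod 4, ¬ (p = 0 ∨ p = 2) ↔ p = 1 ∨ p = 3 := by decide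
  ext v
  exact odd_iff (f v)

theorem exists_fibers_eq_of_partition {A B C D : Set V} (hAC : Disjoint A C) (hBD : Disjoint B D)
    (hcompl : B ∪ D = (A ∪ C)ᶜ) :
    ∃ f : V → ZMod 4, f ⁻¹' {0} = A ∧ f ⁻¹' {1} = B ∧ f ⁻¹' {2} = C ∧ f ⁻¹' {3} = D := by
  classical
  have distinct : (0 : ZMod 4) ≠ 1 ∧ (0 : ZMod 4) ≠ 2 ∧ (0 : ZMod 4) ≠ 3 ∧
      (1 : ZMod 4) ≠ 2 ∧ (1 : ZMod 4) ≠ 3 ∧ (2 : ZMod 4) ≠ 3 := by decide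
  have mem_BD_iff (v : V) : v ∈ B ∨ v ∈ D ↔ ¬ (v ∈ A ∨ v ∈ C) := Set.ext_iff.mp hcompl v
  rw [Set.disjoint_left] at hAC hBD
  refine ⟨fun v ↦ if v ∈ A then 0 else if v ∈ B then 1 else if v ∈ C then 2 else 3,
    ?_, ?_, ?_, ?_⟩ <;> ext v <;> grind

theorem sHom_C4ref_iff_disconnected_cut_general (G : SimpleGraph V) :
    (∃ f : V → ZMod 4, Function.Surjective f ∧
        ∀ u v, G.Adj u v → (f u - f v = 1 ∨ f u - f v = 0 ∨ f u - f v = -1)) ↔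
      (∃ U : Set V, U.Nonempty ∧ Uᶜ.Nonempty ∧
        ¬ (G.induce U).Connected ∧ ¬ (G.induce Uᶜ).Connected) := by
  constructor
  · rintro ⟨f, hf⟩
    obtain ⟨h02, h13⟩ := surjective_and_isC4refHom_iff_isSeparation_fibers.mp hf
    have hU : (f ⁻¹' {0} ∪ f ⁻¹' {2}).Nonempty := h02.nonempty_left.inl
    have hUc : (f ⁻¹' {0} ∪ f ⁻¹' {2})ᶜ.Nonempty :=
      compl_fiber_zero_union_fiber_two f ▸ h13.nonempty_left.inl
    exact ⟨_, hU, hUc,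
      (not_connected_induce_iff_exists_isSeparation hU).mpr ⟨_, _, h02, rfl⟩,
      (not_connected_induce_iff_exists_isSeparation hUc).mpr
        ⟨_, _, h13, (compl_fiber_zero_union_fiber_two f).symm⟩⟩
  · rintro ⟨U, hU, hUc, hU_disconn, hUc_disconn⟩
    obtain ⟨A, C, hAC, rfl⟩ := (not_connected_induce_iff_exists_isSeparation hU).mp hU_disconn
    obtain ⟨B, D, hBD, hcompl⟩ :=
      (not_connected_induce_iff_exists_isSeparation hUc).mp hUc_disconn
    obtain ⟨f, rfl, rfl, rfl, rfl⟩ :=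
      exists_fibers_eq_of_partition hAC.disjoint hBD.disjoint hcompl
    exact ⟨f, surjective_and_isC4refHom_iff_isSeparation_fibers.mpr ⟨hAC, hBD⟩⟩

end

/-- A finite graph has a surjective homomorphism onto the reflexive 4-cycle `C₄^ref`
iff it has a disconnected cut: a set `U` of vertices, with `U` and its complement
nonempty, inducing a disconnected subgraph, whose complement also induces a
disconnected subgraph. -/
theorem sHom_C4ref_iff_disconnected_cut {V : Type*} [Fintype V] (G : SimpleGraph V) :
    (∃ f : V → ZMod 4, Function.Surjective f ∧
        ∀ u v, G.Adj u v → (f u - f v = 1 ∨ f u - f v = 0 ∨ f u - f v = -1)) ↔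
      (∃ U : Set V, U.Nonempty ∧ Uᶜ.Nonempty ∧
        ¬ (G.induce U).Connected ∧ ¬ (G.induce Uᶜ).Connected) :=
  sHom_C4ref_iff_disconnected_cut_general G
end

section
/- Let G be a finite simple graph. There exists a surjective homomorphism from G to C4^ref if and only if the complement graph of G admits a 2K2-partition: a partition of the vertex set into four nonempty classes A, B, C, D such that, in the complement of G, every vertex of A is adjacent to every vertex of B and every vertex of C is adjacent to every vertex of D. -/
/-!
In the reflexive 4-cycle on `ZMod 4` the only non-adjacent pairs are the antipodal ones `{0, 2}` and
`{1, 3}`. So a map to `ZMod 4` is a homomorphism exactly when antipodal fibres are completely joined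
in the complement, and the fibres over `0, 2, 1, 3` serve as the classes `A, B, C, D`.
-/

open Function

theorem exists_preimage_singleton_eq {ι α : Type*} {s : ι → Set α}
    (disjoint : Pairwise (Disjoint on s)) (cover : ∀ x, ∃ i, x ∈ s i) :
    ∃ f : α → ι, ∀ i, f ⁻¹' {i} = s i := by
  choose f mem_f using cover
  refine ⟨f, fun i => Set.ext fun x => ⟨?_, fun hx => ?_⟩⟩
  · rintro rfl
    exact mem_f x
  · exact disjoint.eq (Set.not_disjoint_iff.2 ⟨x, mem_f x, hx⟩)

theorem zmod_four_sub_eq_one_or_zero_or_neg_one_iff (x y : ZMod 4) :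
    (x - y = 1 ∨ x - y = 0 ∨ x - y = -1) ↔ y ≠ x + 2 := by
  decide +revert

theorem surjective_zmod_four_iff_nonempty_fibers {α : Type*} {f : α → ZMod 4} :
    Surjective f ↔ (f ⁻¹' {0}).Nonempty ∧ (f ⁻¹' {2}).Nonempty ∧
      (f ⁻¹' {1}).Nonempty ∧ (f ⁻¹' {3}).Nonempty := by
  refine ⟨fun hf => ⟨hf 0, hf 2, hf 1, hf 3⟩, ?_⟩
  rintro ⟨h₀, h₂, h₁, h₃⟩ i
  fin_cases i
  exacts [h₀, h₁, h₂, h₃]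

section

variable {V : Type*} {G H : SimpleGraph V} {f : V → ZMod 4} {A B C D : Set V}

/-- `f` is a homomorphism from `G` to the reflexive 4-cycle, whose vertex set is `ZMod 4` and whose
adjacency is "the difference is `1`, `0` or `-1`". -/
def IsReflC4Hom (G : SimpleGraph V) (f : V → ZMod 4) : Prop :=
  ∀ u v, G.Adj u v → (f u - f v = 1 ∨ f u - f v = 0 ∨ f u - f v = -1)

/-- `A, B, C, D` form a `2K₂`-partition of `H`: they partition the vertices into nonempty classes,
with `A` completely joined to `B` and `C` completely joined to `D`. It is stated as a conjunction so
that it unfolds to the explicit list of conditions. -/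
def Is2K2Partition (H : SimpleGraph V) (A B C D : Set V) : Prop :=
  A.Nonempty ∧ B.Nonempty ∧ C.Nonempty ∧ D.Nonempty ∧
  (∀ v : V, v ∈ A ∨ v ∈ B ∨ v ∈ C ∨ v ∈ D) ∧
  Disjoint A B ∧ Disjoint A C ∧ Disjoint A D ∧
  Disjoint B C ∧ Disjoint B D ∧ Disjoint C D ∧
  (∀ a ∈ A, ∀ b ∈ B, H.Adj a b) ∧
  (∀ c ∈ C, ∀ d ∈ D, H.Adj c d)

theorem isReflC4Hom_iff_compl_adj_of_eq_add_two :
    IsReflC4Hom G f ↔ ∀ u v, f v = f u + 2 → Gᶜ.Adj u v := by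
  have ne_of_antipodal {u v : V} (h : f v = f u + 2) : u ≠ v := by
    rintro rfl
    exact absurd (left_eq_add.1 h) (by decide)
  simp only [IsReflC4Hom, zmod_four_sub_eq_one_or_zero_or_neg_one_iff, SimpleGraph.compl_adj]
  exact ⟨fun hom u v h => ⟨ne_of_antipodal h, fun huv => hom u v huv h⟩,
    fun joined u v huv h => (joined u v h).2 huv⟩

theorem isReflC4Hom_iff_compl_adj_fibers :
    IsReflC4Hom G f ↔
      (∀ a ∈ f ⁻¹' {0}, ∀ b ∈ f ⁻¹' {2}, Gᶜ.Adj a b) ∧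
      (∀ c ∈ f ⁻¹' {1}, ∀ d ∈ f ⁻¹' {3}, Gᶜ.Adj c d) := by
  have antipodal_pairs : ∀ x y : ZMod 4, y = x + 2 ↔
      x = 0 ∧ y = 2 ∨ x = 2 ∧ y = 0 ∨ x = 1 ∧ y = 3 ∨ x = 3 ∧ y = 1 := by decide
  simp only [isReflC4Hom_iff_compl_adj_of_eq_add_two, antipodal_pairs, Set.mem_preimage,
    Set.mem_singleton_iff]
  refine ⟨fun joined => ⟨fun a ha b hb => joined a b (by simp [ha, hb]),
    fun c hc d hd => joined c d (by simp [hc, hd])⟩, ?_⟩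
  rintro ⟨joined₀₂, joined₁₃⟩ u v (⟨hu, hv⟩ | ⟨hu, hv⟩ | ⟨hu, hv⟩ | ⟨hu, hv⟩)
  exacts [joined₀₂ u hu v hv, (joined₀₂ v hv u hu).symm,
    joined₁₃ u hu v hv, (joined₁₃ v hv u hu).symm]

theorem is2K2Partition_compl_fibers_iff :
    Is2K2Partition Gᶜ (f ⁻¹' {0}) (f ⁻¹' {2}) (f ⁻¹' {1}) (f ⁻¹' {3}) ↔
      Surjective f ∧ IsReflC4Hom G f := by
  have cover : ∀ x : ZMod 4, x = 0 ∨ x = 2 ∨ x = 1 ∨ x = 3 := by decide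
  have disjoint {i j : ZMod 4} (hij : i ≠ j) : Disjoint (f ⁻¹' {i}) (f ⁻¹' {j}) :=
    pairwise_disjoint_fiber f hij
  rw [surjective_zmod_four_iff_nonempty_fibers, isReflC4Hom_iff_compl_adj_fibers]
  constructor
  · rintro ⟨h₀, h₂, h₁, h₃, -, -, -, -, -, -, -, joined⟩
    exact ⟨⟨h₀, h₂, h₁, h₃⟩, joined⟩
  · rintro ⟨⟨h₀, h₂, h₁, h₃⟩, joined⟩
    exact ⟨h₀, h₂, h₁, h₃, fun v => cover (f v),
      disjoint (by decide), disjoint (by decide), disjoint (by decide),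
      disjoint (by decide), disjoint (by decide), disjoint (by decide), joined⟩

theorem Is2K2Partition.exists_fibers_eq (h : Is2K2Partition H A B C D) :
    ∃ f : V → ZMod 4, f ⁻¹' {0} = A ∧ f ⁻¹' {2} = B ∧ f ⁻¹' {1} = C ∧ f ⁻¹' {3} = D := by
  obtain ⟨-, -, -, -, cover, hAB, hAC, hAD, hBC, hBD, hCD, -⟩ := h
  let classes : ZMod 4 → Set V := ![A, C, B, D]
  have pairwise_disjoint : Pairwise (Disjoint on classes) := by
    intro i j hij
    fin_cases i <;> fin_cases j <;>
      first
      | exact absurd rfl hij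
      | assumption
      | exact Disjoint.symm ‹_›
  have mem_classes (v : V) : ∃ i, v ∈ classes i := by
    rcases cover v with hv | hv | hv | hv
    exacts [⟨0, hv⟩, ⟨2, hv⟩, ⟨1, hv⟩, ⟨3, hv⟩]
  obtain ⟨f, hf⟩ := exists_preimage_singleton_eq pairwise_disjoint mem_classes
  exact ⟨f, hf 0, hf 2, hf 1, hf 3⟩

end

theorem sHom_C4ref_iff_2K2_partition_general {V : Type*} (G : SimpleGraph V) :
    (∃ f : V → ZMod 4, Surjective f ∧ IsReflC4Hom G f) ↔
      ∃ A B C D : Set V, Is2K2Partition Gᶜ A B C D := by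
  constructor
  · rintro ⟨f, hf⟩
    exact ⟨_, _, _, _, is2K2Partition_compl_fibers_iff.2 hf⟩
  · rintro ⟨A, B, C, D, h⟩
    obtain ⟨f, rfl, rfl, rfl, rfl⟩ := h.exists_fibers_eq
    exact ⟨f, is2K2Partition_compl_fibers_iff.1 h⟩

/-- A finite graph has a surjective homomorphism onto the reflexive 4-cycle `C₄^ref`
iff its complement admits a `2K₂`-partition: a partition of the vertices into four
nonempty classes `A`, `B`, `C`, `D` such that, in the complement, every vertex of `A`
is adjacent to every vertex of `B` and every vertex of `C` is adjacent to every
vertex of `D`. -/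
theorem sHom_C4ref_iff_2K2_partition {V : Type*} [Fintype V] (G : SimpleGraph V) :
    (∃ f : V → ZMod 4, Function.Surjective f ∧
        ∀ u v, G.Adj u v → (f u - f v = 1 ∨ f u - f v = 0 ∨ f u - f v = -1)) ↔
      (∃ A B C D : Set V,
        A.Nonempty ∧ B.Nonempty ∧ C.Nonempty ∧ D.Nonempty ∧
        (∀ v : V, v ∈ A ∨ v ∈ B ∨ v ∈ C ∨ v ∈ D) ∧
        Disjoint A B ∧ Disjoint A C ∧ Disjoint A D ∧
        Disjoint B C ∧ Disjoint B D ∧ Disjoint C D ∧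
        (∀ a ∈ A, ∀ b ∈ B, Gᶜ.Adj a b) ∧
        (∀ c ∈ C, ∀ d ∈ D, Gᶜ.Adj c d)) :=
  sHom_C4ref_iff_2K2_partition_general G
end

section
/- Let G be a finite connected simple graph containing two vertices at graph distance at least 3. Then there exists a surjective homomorphism from G to C4^ref. -/
/-!
Fix a vertex `u` and send each vertex `w` to its distance from `u` modulo `n`. Distances from `u` to
adjacent vertices differ by at most `1`, so this is a homomorphism to the reflexive `n`-cycle; a
geodesic from `u` to a vertex at distance at least `n - 1` meets all of the distances
`0, …, n - 1`, so it is surjective. Vertices not reachable from `u` have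
`G.dist u w = 0`, so every other component is sent to `0`.
-/

open SimpleGraph

section

variable {V : Type*} {G : SimpleGraph V} {u v w : V}

lemma exists_dist_eq_of_le_dist {k : ℕ} (hk : k ≤ G.dist u v) : ∃ w, G.dist u w = k := by
  obtain rfl | hk_pos := k.eq_zero_or_pos
  · exact ⟨u, dist_self⟩
  · obtain ⟨p, hp⟩ := exists_walk_of_dist_ne_zero (hk_pos.trans_le hk).ne'
    have take_length : (p.take k).length = k := by
      rw [Walk.take_length, hp, min_eq_left hk]
    have take_geodesic : (p.take k).length = G.dist u (p.getVert k) :=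
      length_eq_dist_of_subwalk hp (p.isSubwalk_take k)
    exact ⟨p.getVert k, take_geodesic.symm.trans take_length⟩

lemma surjective_natCast_dist_of_le_dist_add_one {n : ℕ} [NeZero n] (h : n ≤ G.dist u v + 1) :
    Function.Surjective fun w ↦ (G.dist u w : ZMod n) := by
  intro c
  have hc : c.val ≤ G.dist u v := Nat.le_of_lt_succ (c.val_lt.trans_le h)
  obtain ⟨w, hw⟩ := exists_dist_eq_of_le_dist hc
  exact ⟨w, by simp only [hw, ZMod.natCast_zmod_val]⟩

lemma natCast_dist_sub_eq_one_or_zero_or_neg_one {R : Type*} [AddGroupWithOne R]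
    (hvw : G.Adj v w) :
    (G.dist u v - G.dist u w : R) = 1 ∨ (G.dist u v - G.dist u w : R) = 0 ∨
      (G.dist u v - G.dist u w : R) = -1 := by
  -- `1 + _` rather than `_ + 1`: addition in `R` need not be commutative.
  have dist_cases : G.dist u v = 1 + G.dist u w ∨ G.dist u v = G.dist u w ∨
      G.dist u w = 1 + G.dist u v := by
    have := hvw.diff_dist_adj (u := u)
    have := hvw.symm.diff_dist_adj (u := u)
    lia
  rcases dist_cases with h | h | h
  · left; simp [h]
  · right; left; simp [h]
  · right; right; simp [h]

end

theorem sHom_C4ref_of_three_le_dist_general {V : Type*} (G : SimpleGraph V) {n : ℕ} [NeZero n]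
    (h : ∃ u v : V, n ≤ G.dist u v + 1) :
    ∃ f : V → ZMod n, Function.Surjective f ∧
      ∀ u v, G.Adj u v → (f u - f v = 1 ∨ f u - f v = 0 ∨ f u - f v = -1) := by
  obtain ⟨a, b, hab⟩ := h
  exact ⟨fun w ↦ G.dist a w, surjective_natCast_dist_of_le_dist_add_one hab,
    fun _ _ ↦ natCast_dist_sub_eq_one_or_zero_or_neg_one⟩

/-- A finite connected graph containing two vertices at distance at least 3 admits a
surjective homomorphism onto the reflexive 4-cycle `C₄^ref`. -/
theorem sHom_C4ref_of_three_le_dist {V : Type*} [Fintype V] (G : SimpleGraph V)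
    (hconn : G.Connected) (h : ∃ u v : V, 3 ≤ G.dist u v) :
    ∃ f : V → ZMod 4, Function.Surjective f ∧
      ∀ u v, G.Adj u v → (f u - f v = 1 ∨ f u - f v = 0 ∨ f u - f v = -1) := by
  obtain ⟨a, b, hab⟩ := h
  exact sHom_C4ref_of_three_le_dist_general G ⟨a, b, Nat.succ_le_succ hab⟩
end

section
/- Let G be a finite connected simple graph in which every two vertices are at graph distance at most 2. Then every surjective homomorphism f from G to C4^ref is a compaction: for all i, j in Z/4 with i − j ≡ 1 or −1 (mod 4), there exists an edge uv of G with f(u) = i and f(v) = j. -/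
/-!
The 4-cycle matters only through being triangle-free. Join preimages of the ends of one of its
edges `ij` by a path with at most one inner vertex. The value at that vertex is equal or adjacent
to both `i` and `j`, so triangle-freeness forces it to be `i` or `j`, and one of the edges of the
path lies over `ij`.
-/

open SimpleGraph

section Circulant

variable {A : Type*} [AddGroup A] {g : A}

theorem circulantGraph_singleton_adj_iff (hg : g ≠ 0) {i j : A} :
    (circulantGraph {g}).Adj i j ↔ i - j = g ∨ i - j = -g := by
  have hsub : j - i = g ↔ i - j = -g := by rw [← neg_sub i j, neg_eq_iff_eq_neg]
  simp only [circulantGraph_adj, Set.mem_singleton_iff, hsub, and_iff_right_iff_imp]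
  rintro h rfl
  simp [hg, hg.symm] at h

theorem eq_or_circulantGraph_singleton_adj_iff (hg : g ≠ 0) {i j : A} :
    i = j ∨ (circulantGraph {g}).Adj i j ↔ i - j = g ∨ i - j = 0 ∨ i - j = -g := by
  rw [circulantGraph_singleton_adj_iff hg, ← sub_eq_zero, or_left_comm]

theorem circulantGraph_singleton_cliqueFree_three (hg : 3 • g ≠ 0) :
    (circulantGraph {g}).CliqueFree 3 := by
  have hg₀ : g ≠ 0 := by
    rintro rfl
    exact hg (smul_zero 3)
  intro s hs
  classical
  obtain ⟨i, j, k, hij, hik, hjk, rfl⟩ := is3Clique_iff.mp hs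
  rw [circulantGraph_singleton_adj_iff hg₀] at hij hik hjk
  have hsum : i - j + (j - k) = i - k := sub_add_sub_cancel i j k
  have htwo : g + g ≠ -g := fun h ↦ hg (by simp [succ_nsmul, h])
  -- The differences around the triangle give `± g ± g = ± g`, so `g = 0` or `g + g = -g`.
  rcases hij with hij | hij <;> rcases hjk with hjk | hjk <;> rcases hik with hik | hik <;>
    rw [hij, hjk, hik] at hsum <;>
    simp [hg₀, hg₀.symm, htwo, htwo.symm, neg_add_eq_iff_eq_add] at hsum

end Circulant

section TriangleFree

variable {V W : Type*} {G : SimpleGraph V} {H : SimpleGraph W}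

theorem adj_or_exists_adj_adj_of_edist_le_two {u v : V} (hne : u ≠ v) (h : G.edist u v ≤ 2) :
    G.Adj u v ∨ ∃ w, G.Adj u w ∧ G.Adj w v := by
  by_contra! ⟨hadj, hpath⟩
  refine h.not_gt (two_lt_edist_iff.mpr ⟨hne, hadj, Set.eq_empty_of_forall_notMem fun w hw ↦ ?_⟩)
  exact hpath w hw.1 hw.2.symm

theorem ediam_le_of_preconnected_of_dist_le (hG : G.Preconnected) {n : ℕ}
    (h : ∀ u v, G.dist u v ≤ n) : G.ediam ≤ n :=
  ediam_le_of_edist_le fun u v ↦ (hG u v).coe_dist_eq_edist ▸ mod_cast h u v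

theorem eq_or_eq_of_eq_or_adj_of_cliqueFree_three (hH : H.CliqueFree 3) {i j k : W}
    (hij : H.Adj i j) (hik : i = k ∨ H.Adj i k) (hkj : k = j ∨ H.Adj k j) : k = i ∨ k = j := by
  rcases hik with rfl | hik
  · exact .inl rfl
  rcases hkj with rfl | hkj
  · exact .inr rfl
  classical
  exact absurd (is3Clique_triple_iff.mpr ⟨hik, hij, hkj⟩) (hH {i, k, j})

theorem surjHom_C4ref_is_compaction_general (hG : G.ediam ≤ 2) (hH : H.CliqueFree 3)
    {f : V → W} (hsurj : Function.Surjective f)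
    (hhom : ∀ u v, G.Adj u v → f u = f v ∨ H.Adj (f u) (f v)) {i j : W} (hij : H.Adj i j) :
    ∃ u v, G.Adj u v ∧ f u = i ∧ f v = j := by
  obtain ⟨u, rfl⟩ := hsurj i
  obtain ⟨v, rfl⟩ := hsurj j
  have hne : u ≠ v := ne_of_apply_ne f hij.ne
  obtain huv | ⟨w, huw, hwv⟩ :=
    adj_or_exists_adj_adj_of_edist_le_two hne (edist_le_ediam.trans hG)
  · exact ⟨u, v, huv, rfl, rfl⟩
  · obtain hw | hw :=
      eq_or_eq_of_eq_or_adj_of_cliqueFree_three hH hij (hhom u w huw) (hhom w v hwv)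
    · exact ⟨w, v, hwv, hw, rfl⟩
    · exact ⟨u, w, huw, rfl, hw⟩

end TriangleFree

/-- In a finite connected graph of diameter at most 2, every surjective homomorphism
onto the reflexive 4-cycle `C₄^ref` is a compaction: every non-loop edge of `C₄^ref`
has a preimage edge. -/
theorem surjHom_C4ref_is_compaction {V : Type*} [Fintype V] (G : SimpleGraph V)
    (hconn : G.Connected) (hdiam : ∀ u v : V, G.dist u v ≤ 2)
    (f : V → ZMod 4) (hsurj : Function.Surjective f)
    (hhom : ∀ u v, G.Adj u v → (f u - f v = 1 ∨ f u - f v = 0 ∨ f u - f v = -1)) :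
    ∀ i j : ZMod 4, (i - j = 1 ∨ i - j = -1) →
      ∃ u v : V, G.Adj u v ∧ f u = i ∧ f v = j := by
  have hone : (1 : ZMod 4) ≠ 0 := by decide
  exact fun i j hij ↦ surjHom_C4ref_is_compaction_general
    (ediam_le_of_preconnected_of_dist_le hconn.preconnected hdiam)
    (circulantGraph_singleton_cliqueFree_three (by decide)) hsurj
    (fun u v huv ↦ (eq_or_circulantGraph_singleton_adj_iff hone).mpr (hhom u v huv))
    ((circulantGraph_singleton_adj_iff hone).mpr hij)
end

section
/- Let G be a finite connected simple graph in which every two vertices are at graph distance at most 4, and let C6 be the 6-cycle on vertex set Z/6. Then every surjective homomorphism f from G to C6 is edge-surjective: for all i, j in Z/6 with i − j ≡ 1 or −1 (mod 6), there exists an edge uv of G with f(u) = i and f(v) = j. -/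
/-!
The argument works for the `n`-cycle and graphs of diameter at most `n - 2`. Suppose that no edge of
`G` is sent to the pair `(i, i - 1)`. Cutting the cycle between these two values leaves a path, on
which `x` has the position `(x - i).val`. A step along an edge of `G` then raises the position by at
most one, so a walk from the fibre of `i` (position `0`) to the fibre of `i - 1` (position `n - 1`)
has length at least `n - 1`, more than the diameter.
-/

section ZMod

variable {n : ℕ}

theorem val_one_le_one : (1 : ZMod n).val ≤ 1 :=
  (ZMod.val_one_eq_one_mod n).trans_le (Nat.mod_le 1 n)

theorem val_add_one_le_val_add_one (x : ZMod n) : (x + 1).val ≤ x.val + 1 :=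
  (ZMod.val_add_le x 1).trans (Nat.add_le_add_left val_one_le_one x.val)

variable [NeZero n]

theorem val_sub_one_le_val {x : ZMod n} (hx : x ≠ 0) : (x - 1).val ≤ x.val := by
  have one_le_val : (1 : ZMod n).val ≤ x.val := val_one_le_one.trans (ZMod.val_pos.mpr hx)
  rw [ZMod.val_sub one_le_val]
  exact Nat.sub_le _ _

theorem val_neg_one_add_one : (-1 : ZMod n).val + 1 = n := by
  obtain ⟨m, rfl⟩ := Nat.exists_eq_succ_of_ne_zero (NeZero.ne n)
  rw [ZMod.val_neg_one]

theorem val_sub_le_val_sub_add_one {i x y : ZMod n} (hxy : x - y = 1 ∨ x - y = -1)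
    (hcut : ¬(x = i ∧ y = i - 1)) : (y - i).val ≤ (x - i).val + 1 := by
  rcases hxy with descent | ascent
  · obtain rfl : y = x - 1 := by linear_combination -descent
    have hx : x - i ≠ 0 := by
      intro h
      obtain rfl := sub_eq_zero.mp h
      exact hcut ⟨rfl, rfl⟩
    rw [sub_right_comm]
    exact (val_sub_one_le_val hx).trans (Nat.le_succ _)
  · obtain rfl : y = x + 1 := by linear_combination -ascent
    rw [add_sub_right_comm]
    exact val_add_one_le_val_add_one (x - i)

end ZMod

section Graph

variable {V : Type*} {G : SimpleGraph V}

theorem le_add_length_of_adj_le_add_one {φ : V → ℕ}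
    (hφ : ∀ u v, G.Adj u v → φ v ≤ φ u + 1) {u v : V} (p : G.Walk u v) :
    φ v ≤ φ u + p.length := by
  induction p with
  | nil => exact Nat.le_refl _
  | cons hadj p ih =>
    have first_step := hφ _ _ hadj
    rw [SimpleGraph.Walk.length_cons]
    lia

theorem le_add_dist_of_adj_le_add_one {φ : V → ℕ}
    (hφ : ∀ u v, G.Adj u v → φ v ≤ φ u + 1) {u v : V} (huv : G.Reachable u v) :
    φ v ≤ φ u + G.dist u v := by
  obtain ⟨p, hp⟩ := huv.exists_walk_length_eq_dist
  exact hp ▸ le_add_length_of_adj_le_add_one hφ p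

theorem exists_adj_descent_of_dist_add_two_le {n : ℕ} {f : V → ZMod n}
    (hhom : ∀ u v, G.Adj u v → (f u - f v = 1 ∨ f u - f v = -1)) {a b : V}
    (hreach : G.Reachable a b) (hdist : G.dist a b + 2 ≤ n) (hab : f b = f a - 1) :
    ∃ u v, G.Adj u v ∧ f u = f a ∧ f v = f a - 1 := by
  have : NeZero n := ⟨by lia⟩
  by_contra hcut
  have val_le_dist : (f b - f a).val ≤ (f a - f a).val + G.dist a b :=
    le_add_dist_of_adj_le_add_one (φ := fun w ↦ (f w - f a).val)
      (fun u v huv ↦ val_sub_le_val_sub_add_one (hhom u v huv) fun h ↦ hcut ⟨u, v, huv, h⟩) hreach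
  rw [hab, sub_self, ZMod.val_zero, sub_sub_cancel_left] at val_le_dist
  have val_top := val_neg_one_add_one (n := n)
  lia

end Graph

theorem surjHom_C6_is_edge_surjective_general {V : Type*} {n : ℕ} (G : SimpleGraph V)
    (hconn : G.Preconnected) (hdiam : ∀ u v : V, G.dist u v + 2 ≤ n)
    (f : V → ZMod n) (hsurj : Function.Surjective f)
    (hhom : ∀ u v, G.Adj u v → (f u - f v = 1 ∨ f u - f v = -1)) :
    ∀ i j : ZMod n, (i - j = 1 ∨ i - j = -1) →
      ∃ u v : V, G.Adj u v ∧ f u = i ∧ f v = j := by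
  have exists_descent (i : ZMod n) : ∃ u v, G.Adj u v ∧ f u = i ∧ f v = i - 1 := by
    obtain ⟨a, rfl⟩ := hsurj i
    obtain ⟨b, hab⟩ := hsurj (f a - 1)
    exact exists_adj_descent_of_dist_add_two_le hhom (hconn a b) (hdiam a b) hab
  rintro i j (descent | ascent)
  · obtain rfl : j = i - 1 := by linear_combination -descent
    exact exists_descent i
  · obtain rfl : i = j - 1 := by linear_combination ascent
    obtain ⟨u, v, huv, hu, hv⟩ := exists_descent j
    exact ⟨v, u, huv.symm, hv, hu⟩

/-- In a finite connected graph of diameter at most 4, every surjective homomorphism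
onto the 6-cycle `C₆` is edge-surjective. -/
theorem surjHom_C6_is_edge_surjective {V : Type*} [Fintype V] (G : SimpleGraph V)
    (hconn : G.Connected) (hdiam : ∀ u v : V, G.dist u v ≤ 4)
    (f : V → ZMod 6) (hsurj : Function.Surjective f)
    (hhom : ∀ u v, G.Adj u v → (f u - f v = 1 ∨ f u - f v = -1)) :
    ∀ i j : ZMod 6, (i - j = 1 ∨ i - j = -1) →
      ∃ u v : V, G.Adj u v ∧ f u = i ∧ f v = j :=
  surjHom_C6_is_edge_surjective_general G hconn.preconnected
    (fun u v ↦ Nat.add_le_add_right (hdiam u v) 2) f hsurj hhom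
end

section
/- Let r be a binary relation on a set α and s a binary relation on a set β. There exists a surjective homomorphism from r to s if and only if there exist a function c : β → α and a function h : α → β such that: (i) h is a homomorphism from the augmented relation r_c to s, where r_c x y holds iff r x y or there exist b, b' in β with s b b', x = c b and y = c b'; (ii) h is surjective; and (iii) for all b, b' in β with s b b' and b ≠ b', there exist x, y in α with r_c x y, h x = b and h y = b'. -/
section Compaction

variable {α β : Type*}

/-- The relation `r_c` obtained from `r` by adding the image of the template `s` under the chosen
vertices `c`. The map `c` need not be injective, so distinct tuples of `s` may be identified. -/
def AugmentedRel (r : α → α → Prop) (s : β → β → Prop) (c : β → α) (x y : α) : Prop :=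
  r x y ∨ ∃ b b' : β, s b b' ∧ x = c b ∧ y = c b'

/-- Compactions from `r` to `s`, the solutions of the problem `Comp(B)` for the template `s`:
surjective homomorphisms that cover every tuple of `s` except possibly the loops. -/
def IsCompaction (r : α → α → Prop) (s : β → β → Prop) (h : α → β) : Prop :=
  (∀ x y, r x y → s (h x) (h y)) ∧ Function.Surjective h ∧
    ∀ b b', s b b' → b ≠ b' → ∃ x y, r x y ∧ h x = b ∧ h y = b'

variable {r : α → α → Prop} {s : β → β → Prop} {c : β → α} {h : α → β}

theorem forall_augmentedRel_imp_iff {p : α → α → Prop} :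
    (∀ x y, AugmentedRel r s c x y → p x y) ↔
      (∀ x y, r x y → p x y) ∧ ∀ b b', s b b' → p (c b) (c b') := by
  constructor
  · intro hp
    exact ⟨fun x y hxy => hp x y (.inl hxy),
      fun b b' hb => hp (c b) (c b') (.inr ⟨b, b', hb, rfl, rfl⟩)⟩
  · rintro ⟨hr, hs⟩ x y (hxy | ⟨b, b', hb, rfl, rfl⟩)
    · exact hr x y hxy
    · exact hs b b' hb

theorem augmentedRel_hom_iff_of_rightInverse (hc : Function.RightInverse c h) :
    (∀ x y, AugmentedRel r s c x y → s (h x) (h y)) ↔ ∀ x y, r x y → s (h x) (h y) := by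
  have copy_preserved : ∀ b b', s b b' → s (h (c b)) (h (c b')) := fun b b' hb => by
    rwa [hc b, hc b']
  rw [forall_augmentedRel_imp_iff, and_iff_left copy_preserved]

theorem exists_augmentedRel_of_rightInverse (hc : Function.RightInverse c h) {b b' : β}
    (hb : s b b') : ∃ x y, AugmentedRel r s c x y ∧ h x = b ∧ h y = b' :=
  ⟨c b, c b', .inr ⟨b, b', hb, rfl, rfl⟩, hc b, hc b'⟩

theorem isCompaction_augmentedRel_iff_of_rightInverse (hc : Function.RightInverse c h) :
    IsCompaction (AugmentedRel r s c) s h ↔ ∀ x y, r x y → s (h x) (h y) := by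
  rw [← augmentedRel_hom_iff_of_rightInverse hc]
  exact and_iff_left
    ⟨hc.surjective, fun _ _ hb _ => exists_augmentedRel_of_rightInverse hc hb⟩

end Compaction

/-- Correctness of the Turing reduction from `sHom(B)` to `Comp(B)`: there is a
surjective homomorphism from `r` to `s` iff there are witnesses `c : β → α` and a
map `h : α → β` such that `h` is a homomorphism from the augmented relation `r_c`
to `s`, `h` is surjective, and `h` is a compaction: every non-loop tuple of `s` has
a preimage under `h` in `r_c`. -/
theorem sHom_iff_comp_of_augmented {α β : Type*} (r : α → α → Prop) (s : β → β → Prop) :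
    (∃ h : α → β, Function.Surjective h ∧ ∀ x y, r x y → s (h x) (h y)) ↔
      (∃ c : β → α, ∃ h : α → β,
        (∀ x y, (r x y ∨ ∃ b b' : β, s b b' ∧ x = c b ∧ y = c b') → s (h x) (h y)) ∧
        Function.Surjective h ∧
        (∀ b b' : β, s b b' → b ≠ b' →
          ∃ x y : α, (r x y ∨ ∃ b2 b2' : β, s b2 b2' ∧ x = c b2 ∧ y = c b2') ∧
            h x = b ∧ h y = b')) := by
  constructor
  · rintro ⟨h, h_surj, h_hom⟩
    obtain ⟨c, hc⟩ := h_surj.hasRightInverse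
    exact ⟨c, h, (isCompaction_augmentedRel_iff_of_rightInverse hc).2 h_hom⟩
  · rintro ⟨c, h, h_hom, h_surj, _⟩
    exact ⟨h, h_surj, (forall_augmentedRel_imp_iff.1 h_hom).1⟩
end
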